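/- Let E and F be 2-dimensional real inner product spaces, ω_E and ω_F alternating bilinear forms on E and F respectively, and L : E → F a linear isomorphism with ω_F(Lx, Ly) = ω_E(x, y) for all x, y ∈ E. Suppose there is a constant C ≥ 1 such that C⁻¹ ≤ |ω_E(u, v)| ≤ C for every orthonormal pair u, v ∈ E and C⁻¹ ≤ |ω_F(u', v')| ≤ C for every orthonormal pair u', v' ∈ F. Then there exist orthonormal vectors y, z ∈ E with C⁻² ≤ ‖L y‖ · ‖L z‖ ≤ C². -/

import Mathlib

/-- A linear map between finite-dimensional inner product spaces sends some orthonormal basis of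
its domain to pairwise orthogonal vectors. -/
theorem LinearMap.exists_orthonormalBasis_inner_map_eq_zero {𝕜 E F : Type*} [RCLike 𝕜]
    [NormedAddCommGroup E] [InnerProductSpace 𝕜 E] [FiniteDimensional 𝕜 E]
    [NormedAddCommGroup F] [InnerProductSpace 𝕜 F] [FiniteDimensional 𝕜 F]
    {n : ℕ} (hn : Module.finrank 𝕜 E = n) (T : E →ₗ[𝕜] F) :
    ∃ b : OrthonormalBasis (Fin n) 𝕜 E, Pairwise fun i j => inner 𝕜 (T (b i)) (T (b j)) = 0 := by
  have hT := T.isSymmetric_adjoint_comp_self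
  refine ⟨hT.eigenvectorBasis hn, fun i j hij => ?_⟩
  beta_reduce
  rw [← LinearMap.adjoint_inner_right, ← LinearMap.comp_apply, hT.apply_eigenvectorBasis,
    inner_smul_right, (hT.eigenvectorBasis hn).inner_eq_zero hij, mul_zero]

/-- Let `E, F` be 2-dimensional real inner product spaces with alternating
bilinear forms `ω_E, ω_F`, and `L : E ≃ F` a linear isomorphism pulling back `ω_F` to `ω_E`.
If `C ≥ 1` bounds `|ω_E|` and `|ω_F|` above by `C` and below by `C⁻¹` on orthonormal pairs,
then there exist orthonormal `y, z ∈ E` with `C⁻² ≤ ‖L y‖·‖L z‖ ≤ C²`. -/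
theorem stmt_9 {E F : Type*} [NormedAddCommGroup E] [InnerProductSpace ℝ E]
    [NormedAddCommGroup F] [InnerProductSpace ℝ F]
    (hE : Module.finrank ℝ E = 2) (hF : Module.finrank ℝ F = 2)
    (ωE : E →ₗ[ℝ] E →ₗ[ℝ] ℝ) (ωF : F →ₗ[ℝ] F →ₗ[ℝ] ℝ)
    (haltE : ∀ v : E, ωE v v = 0) (haltF : ∀ w : F, ωF w w = 0)
    (L : E ≃ₗ[ℝ] F) (hL : ∀ x y : E, ωF (L x) (L y) = ωE x y)
    (C : ℝ) (hC : 1 ≤ C)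
    (hboundE : ∀ u v : E, ‖u‖ = 1 → ‖v‖ = 1 → inner (𝕜 := ℝ) u v = 0 →
      C⁻¹ ≤ |ωE u v| ∧ |ωE u v| ≤ C)
    (hboundF : ∀ u' v' : F, ‖u'‖ = 1 → ‖v'‖ = 1 → inner (𝕜 := ℝ) u' v' = 0 →
      C⁻¹ ≤ |ωF u' v'| ∧ |ωF u' v'| ≤ C) :
    ∃ y z : E, ‖y‖ = 1 ∧ ‖z‖ = 1 ∧ inner (𝕜 := ℝ) y z = 0 ∧
      (C ^ 2)⁻¹ ≤ ‖L y‖ * ‖L z‖ ∧ ‖L y‖ * ‖L z‖ ≤ C ^ 2 := by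
  have : FiniteDimensional ℝ E := Module.finite_of_finrank_eq_succ hE
  have : FiniteDimensional ℝ F := Module.finite_of_finrank_eq_succ hF
  obtain ⟨b, hb⟩ := L.toLinearMap.exists_orthonormalBasis_inner_map_eq_zero hE
  have h01 : inner ℝ (b 0) (b 1) = 0 := b.inner_eq_zero (by decide)
  have hL01 : inner ℝ (L (b 0)) (L (b 1)) = 0 := hb (by decide)
  have hpos (i : Fin 2) : 0 < ‖L (b i)‖ :=
    norm_pos_iff.2 (L.map_ne_zero_iff.2 (b.orthonormal.ne_zero i))
  have hunit (i : Fin 2) : ‖‖L (b i)‖⁻¹ • L (b i)‖ = 1 := by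
    rw [norm_smul, norm_inv, norm_norm, inv_mul_cancel₀ (hpos i).ne']
  obtain ⟨hE₁, hE₂⟩ := hboundE _ _ (b.norm_eq_one 0) (b.norm_eq_one 1) h01
  obtain ⟨hF₁, hF₂⟩ := hboundF _ _ (hunit 0) (hunit 1)
    (by rw [real_inner_smul_left, real_inner_smul_right, hL01, mul_zero, mul_zero])
  have hP : 0 < ‖L (b 0)‖ * ‖L (b 1)‖ := mul_pos (hpos 0) (hpos 1)
  have hω : |ωF (‖L (b 0)‖⁻¹ • L (b 0)) (‖L (b 1)‖⁻¹ • L (b 1))| =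
      |ωE (b 0) (b 1)| / (‖L (b 0)‖ * ‖L (b 1)‖) := by
    simp only [map_smul, LinearMap.smul_apply, smul_eq_mul, hL, abs_mul, abs_inv, abs_norm]
    field_simp
  rw [hω, le_div_iff₀ hP] at hF₁
  rw [hω, div_le_iff₀ hP] at hF₂
  have hC₀ : 0 < C := one_pos.trans_le hC
  refine ⟨b 0, b 1, b.norm_eq_one 0, b.norm_eq_one 1, h01, ?_, ?_⟩
  · rw [pow_two, mul_inv, ← div_eq_mul_inv, div_le_iff₀' hC₀]
    exact hE₁.trans hF₂
  · rw [pow_two, ← inv_mul_le_iff₀ hC₀]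
    exact hF₁.trans hE₂
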